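/- arXiv:1509.04456 — 4 statements merged into one kernel-verified Lean document; each statement's English description precedes it below -/
import Mathlib

section
/- Let m ≥ 2 be an integer, let p be a real number with p > m, and let n be a positive integer. Let A : ℓ_p^n × ⋯ × ℓ_p^n → 𝕂 be the m-linear form defined by A(x^{(1)}, …, x^{(m)}) = ∑_{j=1}^n x_j^{(1)} ⋯ x_j^{(m)}. Then ‖A‖ ≤ n^{(p−m)/p}. -/
/-!
By the triangle inequality `‖A x‖ ≤ ∑ⱼ ∏ᵢ ‖xᵢⱼ‖`. This is bounded by Hölder's inequality for the
vectors `xᵢ` with exponents `pᵢ` together with the constant vector `1`, whose exponent `q` takes up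
the slack `1/q = 1 - ∑ᵢ 1/pᵢ` and which contributes the factor `n ^ (1/q)`.
-/

open scoped ENNReal NNReal

section Holder

variable {ι κ : Type*}

theorem sum_prod_rpow_le_card_rpow_mul_prod_sum_rpow (s : Finset κ) (t : Finset ι)
    (f : ι → κ → ℝ≥0) {w : ι → ℝ} (hw : ∀ i ∈ t, 0 ≤ w i) (hw_sum : ∑ i ∈ t, w i ≤ 1) :
    ∑ j ∈ s, ∏ i ∈ t, f i j ^ w i ≤
      (s.card : ℝ≥0) ^ (1 - ∑ i ∈ t, w i) * ∏ i ∈ t, (∑ j ∈ s, f i j) ^ w i := by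
  let _ : MeasurableSpace κ := ⊤
  have holder := ENNReal.lintegral_mul_prod_norm_pow_le
    (μ := MeasureTheory.Measure.count.restrict (s : Set κ)) t (g := 1)
    (f := fun i j ↦ (f i j : ℝ≥0∞)) aemeasurable_const
    (fun _ _ ↦ measurable_from_top.aemeasurable) (1 - ∑ i ∈ t, w i) (sub_add_cancel _ _)
    (sub_nonneg.2 hw_sum) hw
  simp only [MeasureTheory.lintegral_finset, MeasureTheory.Measure.count_singleton, Pi.one_apply,
    ENNReal.one_rpow, one_mul, mul_one, Finset.sum_const, nsmul_eq_mul] at holder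
  have coe_prod_rpow (a : ι → ℝ≥0) :
      (↑(∏ i ∈ t, a i ^ w i) : ℝ≥0∞) = ∏ i ∈ t, (a i : ℝ≥0∞) ^ w i := by
    rw [ENNReal.ofNNReal_finsetProd]
    exact Finset.prod_congr rfl fun i hi ↦ ENNReal.coe_rpow_of_nonneg _ (hw i hi)
  rw [← ENNReal.coe_le_coe, ENNReal.coe_mul,
    ENNReal.coe_rpow_of_nonneg _ (sub_nonneg.2 hw_sum)]
  simpa only [ENNReal.ofNNReal_finsetSum, coe_prod_rpow, ENNReal.coe_natCast] using holder

theorem exists_sum_le_one_and_nnnorm_apply_le_mul_rpow [Fintype κ] {p : ℝ≥0∞} [Fact (1 ≤ p)]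
    {E : κ → Type*} [∀ j, SeminormedAddCommGroup (E j)] (x : PiLp p E) :
    ∃ b : κ → ℝ≥0, ∑ j, b j ≤ 1 ∧ ∀ j, ‖x j‖₊ ≤ ‖x‖₊ * b j ^ p⁻¹.toReal := by
  rcases eq_or_ne p ∞ with rfl | hp_top
  -- The exponent is `0` here, and `0 ^ 0 = 1`.
  · exact ⟨0, by simp, fun j ↦ by simpa using PiLp.nnnorm_apply_le x j⟩
  have hp : 0 < p.toReal := ENNReal.toReal_pos (zero_lt_one.trans_le Fact.out).ne' hp_top
  refine ⟨fun j ↦ (‖x j‖₊ / ‖x‖₊) ^ p.toReal, ?_, fun j ↦ ?_⟩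
  · have norm_rpow : ‖x‖₊ ^ p.toReal = ∑ j, ‖x j‖₊ ^ p.toReal := by
      rw [PiLp.nnnorm_eq_sum hp_top, one_div, NNReal.rpow_inv_rpow hp.ne']
    simp_rw [NNReal.div_rpow]
    rw [← Finset.sum_div, ← norm_rpow]
    exact div_self_le_one _
  · have norm_eq_zero_imp (hx : ‖x‖₊ = 0) : ‖x j‖₊ = 0 :=
      le_zero_iff.1 (hx ▸ PiLp.nnnorm_apply_le x j)
    rw [ENNReal.toReal_inv, NNReal.rpow_rpow_inv hp.ne', mul_div_cancel_of_imp' norm_eq_zero_imp]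

theorem sum_prod_nnnorm_le_card_rpow_mul_prod_nnnorm [Fintype ι] [Fintype κ] {p : ι → ℝ≥0∞}
    [∀ i, Fact (1 ≤ p i)] (hp : ∑ i, (p i)⁻¹.toReal ≤ 1) {E : ι → κ → Type*}
    [∀ i j, SeminormedAddCommGroup (E i j)] (x : ∀ i, PiLp (p i) (E i)) :
    ∑ j, ∏ i, ‖x i j‖₊ ≤
      (Fintype.card κ : ℝ≥0) ^ (1 - ∑ i, (p i)⁻¹.toReal) * ∏ i, ‖x i‖₊ := by
  choose b b_sum x_le using fun i ↦ exists_sum_le_one_and_nnnorm_apply_le_mul_rpow (x i)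
  calc
    ∑ j, ∏ i, ‖x i j‖₊ ≤ ∑ j, ∏ i, (‖x i‖₊ * b i j ^ (p i)⁻¹.toReal) := by
      gcongr with j _ i _
      exact x_le i j
    _ = (∏ i, ‖x i‖₊) * ∑ j, ∏ i, b i j ^ (p i)⁻¹.toReal := by
      simp_rw [Finset.prod_mul_distrib, Finset.mul_sum]
    _ ≤ (∏ i, ‖x i‖₊) * ((Fintype.card κ : ℝ≥0) ^ (1 - ∑ i, (p i)⁻¹.toReal) *
          ∏ i, (∑ j, b i j) ^ (p i)⁻¹.toReal) := by
      gcongr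
      exact sum_prod_rpow_le_card_rpow_mul_prod_sum_rpow _ _ _
        (fun _ _ ↦ ENNReal.toReal_nonneg) hp
    _ ≤ (∏ i, ‖x i‖₊) * ((Fintype.card κ : ℝ≥0) ^ (1 - ∑ i, (p i)⁻¹.toReal) * 1) := by
      gcongr
      exact Finset.prod_le_one' fun i _ ↦ NNReal.rpow_le_one (b_sum i) ENNReal.toReal_nonneg
    _ = (Fintype.card κ : ℝ≥0) ^ (1 - ∑ i, (p i)⁻¹.toReal) * ∏ i, ‖x i‖₊ := by
      rw [mul_one, mul_comm]

theorem stmt_6_general [Fintype ι] [Fintype κ] {𝕂 : Type*} [NontriviallyNormedField 𝕂]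
    {p : ι → ℝ≥0∞} [∀ i, Fact (1 ≤ p i)] (hp : ∑ i, (p i)⁻¹.toReal ≤ 1)
    (A : ContinuousMultilinearMap 𝕂 (fun i ↦ PiLp (p i) (fun _ : κ ↦ 𝕂)) 𝕂)
    (hA : ∀ x, A x = ∑ j, ∏ i, x i j) :
    ‖A‖ ≤ (Fintype.card κ : ℝ) ^ (1 - ∑ i, (p i)⁻¹.toReal) := by
  refine A.opNorm_le_bound (by positivity) fun x ↦ ?_
  calc
    ‖A x‖ ≤ ∑ j, ‖∏ i, x i j‖ := hA x ▸ norm_sum_le _ _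
    _ = ∑ j, ∏ i, ‖x i j‖ := by simp_rw [norm_prod]
    _ ≤ (Fintype.card κ : ℝ) ^ (1 - ∑ i, (p i)⁻¹.toReal) * ∏ i, ‖x i‖ := by
      simpa [← NNReal.coe_le_coe] using sum_prod_nnnorm_le_card_rpow_mul_prod_nnnorm hp x

end Holder

/-- For `m ≥ 2`, `p > m`, the `m`-linear form
`A(x^{(1)},…,x^{(m)}) = ∑_{j=1}^n x_j^{(1)} ⋯ x_j^{(m)}` on `ℓ_p^n × ⋯ × ℓ_p^n`
satisfies `‖A‖ ≤ n^{(p−m)/p}`. -/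
theorem stmt_6 {𝕂 : Type*} [RCLike 𝕂] (m : ℕ) (hm : 2 ≤ m) (p : ℝ)
    (hp : (m : ℝ) < p) [Fact (1 ≤ ENNReal.ofReal p)]
    (n : ℕ) (hn : 0 < n)
    (A : ContinuousMultilinearMap 𝕂
      (fun _ : Fin m => PiLp (ENNReal.ofReal p) (fun _ : Fin n => 𝕂)) 𝕂)
    (hA : ∀ x, A x = ∑ j : Fin n, ∏ i : Fin m,
      (WithLp.equiv (ENNReal.ofReal p) (Fin n → 𝕂)) (x i) j) :
    ‖A‖ ≤ (n : ℝ) ^ ((p - (m : ℝ)) / p) := by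
  have hp_pos : 0 < p := (Nat.cast_nonneg m).trans_lt hp
  have sum_inv : ∑ _ : Fin m, (ENNReal.ofReal p)⁻¹.toReal = m / p := by
    simp [ENNReal.toReal_ofReal hp_pos.le, div_eq_mul_inv]
  have norm_le := stmt_6_general (sum_inv.trans_le ((div_le_one hp_pos).2 hp.le)) A hA
  rwa [sum_inv, Fintype.card_fin, one_sub_div hp_pos.ne'] at norm_le
end

section
/- Let m ≥ 2 be an integer, let p and s be real numbers with p > m and s ≥ p/(p−m), and let n be a positive integer. Then for every continuous m-linear form T : ℓ_p^n × ⋯ × ℓ_p^n → 𝕂 one has (∑_{j=1}^n |T(e_j, …, e_j)|^s)^{1/s} ≤ ‖T‖. -/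
/-!
Multiply the vector in slot `i` by a random sign vector `εⁱ`, and the one in a fixed slot `i₀` also
by the product of all of them. This does not change the norms, and the coefficient of
`T (e_{r i})_i` picks up the factor `∏ i, εⁱ (r i₀) εⁱ (r i)`, whose mean is `1` if `r` is constant
and `0` otherwise. Hence the diagonal part `∑ j, (∏ i, xⁱ_j) T(e_j, …, e_j)` is bounded by
`‖T‖ ∏ i, ‖xⁱ‖`, and phases put into slot `i₀` bring absolute values inside the sum.

With `a_j = |T(e_j, …, e_j)|` and `S = ∑ j, a_j ^ s`, test this on `xⁱ_j = b_j ^ (1 / p i)`, where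
`b_j = a_j ^ s / S` has sum `1`. Since `b_j ≤ 1` and `∑ i, 1 / p i ≤ 1 - 1 / s`, the result is
`‖T‖ ≥ ∑ j, b_j ^ (1 - 1 / s) a_j = ∑ j, b_j S ^ (1 / s) = S ^ (1 / s)`.
-/

open scoped ENNReal

section PiLp

variable {κ : Type*} [Fintype κ] {q : ℝ≥0∞} [Fact (1 ≤ q)]

lemma piLp_norm_congr {α β : κ → Type*} [∀ j, SeminormedAddCommGroup (α j)]
    [∀ j, SeminormedAddCommGroup (β j)] {x : PiLp q α} {y : PiLp q β}
    (h : ∀ j, ‖x j‖ = ‖y j‖) : ‖x‖ = ‖y‖ := by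
  obtain rfl | hq := q.dichotomy
  · simp only [PiLp.norm_eq_ciSup, h]
  · simp only [PiLp.norm_eq_sum (zero_lt_one.trans_le hq), h]

lemma norm_toLp_rpow_le_one {𝕂 : Type*} [RCLike 𝕂] {b : κ → ℝ} (hb : ∀ j, 0 ≤ b j)
    (hsum : ∑ j, b j = 1) :
    ‖WithLp.toLp q fun j => ((b j ^ q⁻¹.toReal : ℝ) : 𝕂)‖ ≤ 1 := by
  obtain rfl | hq := q.dichotomy
  · simp only [PiLp.norm_eq_ciSup, ENNReal.inv_top, ENNReal.toReal_zero, Real.rpow_zero,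
      RCLike.ofReal_one, norm_one]
    exact Real.iSup_le (fun _ => le_rfl) zero_le_one
  · have hq0 : 0 < q.toReal := zero_lt_one.trans_le hq
    have hpow (j : κ) : ‖((b j ^ q⁻¹.toReal : ℝ) : 𝕂)‖ ^ q.toReal = b j := by
      rw [RCLike.norm_ofReal, abs_of_nonneg (Real.rpow_nonneg (hb j) _), ENNReal.toReal_inv,
        Real.rpow_inv_rpow (hb j) hq0.ne']
    simp only [PiLp.norm_eq_sum hq0, hpow, hsum, Real.one_rpow, le_refl]

end PiLp

section Real

lemma rpow_sum_rpow_le_of_forall_sum_mul_le {κ : Type*} [Fintype κ] {a : κ → ℝ}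
    (ha : ∀ j, 0 ≤ a j) {s θ C : ℝ} (hs : 0 < s) (hθ : 0 ≤ θ) (hθs : θ + s⁻¹ ≤ 1) (hC : 0 ≤ C)
    (h : ∀ b : κ → ℝ, (∀ j, 0 ≤ b j) → ∑ j, b j = 1 → ∑ j, b j ^ θ * a j ≤ C) :
    (∑ j, a j ^ s) ^ (1 / s) ≤ C := by
  have has (j : κ) : 0 ≤ a j ^ s := Real.rpow_nonneg (ha j) s
  set S := ∑ j, a j ^ s
  have hS : 0 ≤ S := Finset.sum_nonneg fun j _ => has j
  rw [one_div]
  obtain hS0 | hS0 := hS.eq_or_lt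
  · rwa [← hS0, Real.zero_rpow (inv_ne_zero hs.ne')]
  let b : κ → ℝ := fun j => a j ^ s / S
  have hb0 (j : κ) : 0 ≤ b j := div_nonneg (has j) hS
  have hb1 : ∑ j, b j = 1 := by rw [← Finset.sum_div, div_self hS0.ne']
  have hb_le (j : κ) : b j ≤ 1 :=
    hb1 ▸ Finset.single_le_sum (fun k _ => hb0 k) (Finset.mem_univ j)
  have ha_eq (j : κ) : a j = S ^ s⁻¹ * b j ^ s⁻¹ := by
    rw [← Real.mul_rpow hS (hb0 j), mul_div_cancel₀ _ hS0.ne', Real.rpow_rpow_inv (ha j) hs.ne']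
  calc S ^ s⁻¹ = ∑ j, b j * S ^ s⁻¹ := by rw [← Finset.sum_mul, hb1, one_mul]
    _ = ∑ j, b j ^ (1 - s⁻¹) * a j := by
      refine Finset.sum_congr rfl fun j _ => ?_
      rw [ha_eq j, mul_left_comm, ← Real.rpow_add_of_nonneg (hb0 j) (by linarith) (by positivity),
        sub_add_cancel, Real.rpow_one, mul_comm]
    _ ≤ ∑ j, b j ^ θ * a j := Finset.sum_le_sum fun j _ => mul_le_mul_of_nonneg_right
      (Real.rpow_le_rpow_of_exponent_ge' (hb0 j) (hb_le j) hθ (by linarith)) (ha j)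
    _ ≤ C := h b hb0 hb1

lemma div_add_inv_le_one {m p s : ℝ} (hp : 0 < p) (hmp : m < p) (hs : p / (p - m) ≤ s) :
    m / p + s⁻¹ ≤ 1 := by
  have hinv : s⁻¹ ≤ (p - m) / p := by
    rw [← inv_div]
    exact inv_anti₀ (div_pos hp (sub_pos.mpr hmp)) hs
  calc m / p + s⁻¹ ≤ m / p + (p - m) / p := by gcongr
    _ = 1 := by rw [← add_div, add_sub_cancel, div_self hp.ne']

end Real

section Signs

variable {ι κ : Type*} [Fintype ι] [DecidableEq ι]

lemma prod_mulSingle_apply {M : Type*} [CommMonoid M] (i₀ : ι) (g : κ → M) (r : ι → κ) :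
    ∏ i, (Pi.mulSingle i₀ g : ι → κ → M) i (r i) = g (r i₀) := by
  rw [Fintype.prod_eq_single i₀ fun i hi => by rw [Pi.mulSingle_eq_of_ne hi, Pi.one_apply],
    Pi.mulSingle_eq_same]

lemma sum_sign_mul_sign [Fintype κ] [DecidableEq κ] (a b : κ) :
    ∑ η : κ → ℤˣ, ((η a * η b : ℤˣ) : ℤ) = if a = b then (Fintype.card (κ → ℤˣ) : ℤ) else 0 := by
  classical
  let χ : (κ → ℤˣ) →* ℤ := (Units.coeHom ℤ).comp
    (Pi.evalMonoidHom (fun _ : κ => ℤˣ) a * Pi.evalMonoidHom (fun _ : κ => ℤˣ) b)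
  have hχ : χ = 1 ↔ a = b := by
    refine ⟨fun h => ?_, fun h => ?_⟩
    · by_contra hab
      have hflip := DFunLike.congr_fun h (Pi.mulSingle a (-1))
      simp [χ, Pi.mulSingle_eq_of_ne (Ne.symm hab)] at hflip
    · ext η
      simp [χ, h]
  simpa [χ, hχ] using sum_hom_units χ

/-- The signs put on the coordinates of each slot: every slot `i` carries its own sign vector `ε i`,
and slot `i₀` in addition the product of all of them. -/
def slotSigns (i₀ : ι) (ε : ι → κ → ℤˣ) : ι → κ → ℤˣ :=
  ε * Pi.mulSingle i₀ (∏ i, ε i)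

lemma prod_slotSigns (i₀ : ι) (ε : ι → κ → ℤˣ) (r : ι → κ) :
    ∏ i, slotSigns i₀ ε i (r i) = ∏ i, ε i (r i₀) * ε i (r i) := by
  simp only [slotSigns, Pi.mul_apply, Finset.prod_mul_distrib, prod_mulSingle_apply,
    Finset.prod_apply, mul_comm]

lemma sum_prod_slotSigns [Fintype κ] [DecidableEq κ] (i₀ : ι) (r : ι → κ) :
    ∑ ε : ι → κ → ℤˣ, ((∏ i, slotSigns i₀ ε i (r i) : ℤˣ) : ℤ) =
      if ∀ i, r i₀ = r i then (Fintype.card (ι → κ → ℤˣ) : ℤ) else 0 := by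
  simp only [prod_slotSigns, Units.coe_prod]
  rw [← Fintype.prod_sum fun i (η : κ → ℤˣ) => ((η (r i₀) * η (r i) : ℤˣ) : ℤ)]
  simp only [sum_sign_mul_sign, Finset.prod_ite_zero]
  simp [Fintype.card_fun (α := ι)]

end Signs

section Diagonal

variable {𝕂 F ι κ : Type*} [Fintype ι] [Fintype κ] [DecidableEq κ] {p : ι → ℝ≥0∞}

lemma multilinearMap_apply_eq_sum_single [CommRing 𝕂] [AddCommMonoid F] [Module 𝕂 F]
    [DecidableEq ι] (T : MultilinearMap 𝕂 (fun i => PiLp (p i) fun _ : κ => 𝕂) F)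
    (x : ∀ i, PiLp (p i) fun _ : κ => 𝕂) :
    T x = ∑ r : ι → κ, (∏ i, x i (r i)) • T fun i => PiLp.single (p i) (r i) 1 := by
  have hx : x = fun i => ∑ j, x i j • PiLp.single (p i) j (1 : 𝕂) := by
    ext i j
    simp [Pi.single_apply]
  conv_lhs => rw [hx, T.map_sum]
  exact Finset.sum_congr rfl fun r _ => T.map_smul_univ (fun i => x i (r i)) _

lemma sum_apply_slotSigns_smul [CommRing 𝕂] [AddCommGroup F] [Module 𝕂 F] [DecidableEq ι]
    (T : MultilinearMap 𝕂 (fun i => PiLp (p i) fun _ : κ => 𝕂) F)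
    (x : ∀ i, PiLp (p i) fun _ : κ => 𝕂) (i₀ : ι) :
    ∑ ε : ι → κ → ℤˣ, T (fun i => WithLp.toLp (p i) fun j => slotSigns i₀ ε i j • x i j) =
      Fintype.card (ι → κ → ℤˣ) • ∑ j, (∏ i, x i j) • T fun i => PiLp.single (p i) j 1 := by
  set N := Fintype.card (ι → κ → ℤˣ)
  let term (r : ι → κ) : F := (∏ i, x i (r i)) • T fun i => PiLp.single (p i) (r i) 1
  have expand (ε : ι → κ → ℤˣ) :
      T (fun i => WithLp.toLp (p i) fun j => slotSigns i₀ ε i j • x i j) =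
        ∑ r, ((∏ i, slotSigns i₀ ε i (r i) : ℤˣ) : ℤ) • term r := by
    rw [multilinearMap_apply_eq_sum_single]
    refine Finset.sum_congr rfl fun r _ => ?_
    simp only [Finset.prod_smul, Units.smul_def, Units.coe_prod, smul_assoc]
    rfl
  calc ∑ ε : ι → κ → ℤˣ, T (fun i => WithLp.toLp (p i) fun j => slotSigns i₀ ε i j • x i j)
      = ∑ r, (if ∀ i, r i₀ = r i then (N : ℤ) else 0) • term r := by
        simp only [expand]
        rw [Finset.sum_comm]
        simp only [← Finset.sum_smul, sum_prod_slotSigns, N]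
    _ = ∑ j, N • term (Function.const ι j) := by
        refine (Fintype.sum_of_injective (Function.const ι)
          (@Function.const_injective _ _ ⟨i₀⟩) _ _ (fun r hr => ?_) fun j => ?_).symm
        · rw [if_neg fun h : ∀ i, r i₀ = r i => hr ⟨r i₀, funext h⟩, zero_smul]
        · simp only [Function.const_apply, implies_true, if_true, natCast_zsmul]
    _ = N • ∑ j, term (Function.const ι j) := Finset.smul_sum.symm

variable [RCLike 𝕂] [Nonempty ι] [∀ i, Fact (1 ≤ p i)]

lemma norm_sum_diagonal_le [NormedAddCommGroup F] [NormedSpace 𝕂 F]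
    (T : ContinuousMultilinearMap 𝕂 (fun i => PiLp (p i) fun _ : κ => 𝕂) F)
    (x : ∀ i, PiLp (p i) fun _ : κ => 𝕂) :
    ‖∑ j, (∏ i, x i j) • T fun i => PiLp.single (p i) j 1‖ ≤ ‖T‖ * ∏ i, ‖x i‖ := by
  classical
  obtain ⟨i₀⟩ := ‹Nonempty ι›
  set D := ∑ j, (∏ i, x i j) • T fun i => PiLp.single (p i) j 1
  let N := Fintype.card (ι → κ → ℤˣ)
  let y (ε : ι → κ → ℤˣ) (i : ι) : PiLp (p i) fun _ : κ => 𝕂 :=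
    WithLp.toLp (p i) fun j => slotSigns i₀ ε i j • x i j
  have hy (ε : ι → κ → ℤˣ) (i : ι) : ‖y ε i‖ = ‖x i‖ :=
    piLp_norm_congr fun j => norm_units_zsmul _ _
  have hN : (0 : ℝ) < N := Nat.cast_pos.mpr Fintype.card_pos
  refine le_of_mul_le_mul_left ?_ hN
  calc N * ‖D‖ = ‖N • D‖ := by rw [RCLike.norm_nsmul 𝕂, nsmul_eq_mul]
    _ = ‖∑ ε, T (y ε)‖ := congrArg norm (sum_apply_slotSigns_smul T.toMultilinearMap x i₀).symm
    _ ≤ ∑ ε, ‖T‖ * ∏ i, ‖y ε i‖ := norm_sum_le_of_le _ fun ε _ => T.le_opNorm _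
    _ = N * (‖T‖ * ∏ i, ‖x i‖) := by
      simp only [hy, Finset.sum_const, Finset.card_univ, nsmul_eq_mul, N]

lemma sum_prod_norm_mul_norm_diagonal_le
    (T : ContinuousMultilinearMap 𝕂 (fun i => PiLp (p i) fun _ : κ => 𝕂) 𝕂)
    (x : ∀ i, PiLp (p i) fun _ : κ => 𝕂) :
    ∑ j, (∏ i, ‖x i j‖) * ‖T fun i => PiLp.single (p i) j 1‖ ≤ ‖T‖ * ∏ i, ‖x i‖ := by
  classical
  obtain ⟨i₀⟩ := ‹Nonempty ι›
  choose c hc hc_mul using fun j =>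
    RCLike.exists_norm_eq_mul_self ((∏ i, x i j) * T fun i => PiLp.single (p i) j 1)
  let y (i : ι) : PiLp (p i) fun _ : κ => 𝕂 :=
    WithLp.toLp (p i) fun j => (Pi.mulSingle i₀ c : ι → κ → 𝕂) i j * x i j
  have hy (i : ι) : ‖y i‖ = ‖x i‖ := by
    refine piLp_norm_congr fun j => ?_
    obtain rfl | hi := eq_or_ne i i₀
    · simp only [y, Pi.mulSingle_eq_same, norm_mul, hc, one_mul]
    · simp only [y, Pi.mulSingle_eq_of_ne hi, Pi.one_apply, one_mul]
  have hterm (j : κ) : (((∏ i, ‖x i j‖) * ‖T fun i => PiLp.single (p i) j 1‖ : ℝ) : 𝕂) =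
      (∏ i, y i j) • T fun i => PiLp.single (p i) j 1 := by
    simp only [y, Finset.prod_mul_distrib, prod_mulSingle_apply i₀ c fun _ => j, smul_eq_mul,
      mul_assoc, ← hc_mul, norm_mul, norm_prod]
  calc ∑ j, (∏ i, ‖x i j‖) * ‖T fun i => PiLp.single (p i) j 1‖
      = ‖∑ j, (∏ i, y i j) • T fun i => PiLp.single (p i) j 1‖ := by
        simp only [← hterm, ← RCLike.ofReal_sum]
        exact (RCLike.norm_of_nonneg (by positivity)).symm
    _ ≤ ‖T‖ * ∏ i, ‖y i‖ := norm_sum_diagonal_le T y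
    _ = ‖T‖ * ∏ i, ‖x i‖ := by simp only [hy]

end Diagonal

theorem stmt_7_general {𝕂 ι κ : Type*} [RCLike 𝕂] [Fintype ι] [Nonempty ι] [Fintype κ]
    [DecidableEq κ] {p : ι → ℝ≥0∞} [∀ i, Fact (1 ≤ p i)] {s : ℝ} (hs : 0 < s)
    (hps : ∑ i, (p i)⁻¹.toReal + s⁻¹ ≤ 1)
    (T : ContinuousMultilinearMap 𝕂 (fun i => PiLp (p i) fun _ : κ => 𝕂) 𝕂) :
    (∑ j, ‖T fun i => PiLp.single (p i) j 1‖ ^ s) ^ (1 / s) ≤ ‖T‖ := by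
  have hp (i : ι) : 0 ≤ (p i)⁻¹.toReal := ENNReal.toReal_nonneg
  refine rpow_sum_rpow_le_of_forall_sum_mul_le (fun j => norm_nonneg _) hs
    (Finset.sum_nonneg fun i _ => hp i) hps (norm_nonneg T) fun b hb0 hb1 => ?_
  let x (i : ι) : PiLp (p i) fun _ : κ => 𝕂 :=
    WithLp.toLp (p i) fun j => ((b j ^ (p i)⁻¹.toReal : ℝ) : 𝕂)
  have hx (j : κ) : ∏ i, ‖x i j‖ = b j ^ ∑ i, (p i)⁻¹.toReal := by
    simp only [x, RCLike.norm_ofReal, abs_of_nonneg (Real.rpow_nonneg (hb0 j) _)]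
    exact (Real.rpow_sum_of_nonneg (hb0 j) fun i _ => hp i).symm
  calc ∑ j, b j ^ (∑ i, (p i)⁻¹.toReal) * ‖T fun i => PiLp.single (p i) j 1‖
      = ∑ j, (∏ i, ‖x i j‖) * ‖T fun i => PiLp.single (p i) j 1‖ := by simp only [hx]
    _ ≤ ‖T‖ * ∏ i, ‖x i‖ := sum_prod_norm_mul_norm_diagonal_le T x
    _ ≤ ‖T‖ := mul_le_of_le_one_right (norm_nonneg T) <|
      Finset.prod_le_one (fun i _ => norm_nonneg _) fun i _ => norm_toLp_rpow_le_one hb0 hb1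

/-- For `m ≥ 2`, `p > m`, `s ≥ p/(p−m)` and every continuous `m`-linear form
`T : ℓ_p^n × ⋯ × ℓ_p^n → 𝕂`, `(∑_{j=1}^n |T(e_j,…,e_j)|^s)^{1/s} ≤ ‖T‖`. -/
theorem stmt_7 {𝕂 : Type*} [RCLike 𝕂] (m : ℕ) (hm : 2 ≤ m) (p s : ℝ)
    (hp : (m : ℝ) < p) (hs : p / (p - (m : ℝ)) ≤ s) [Fact (1 ≤ ENNReal.ofReal p)]
    (n : ℕ) (hn : 0 < n)
    (T : ContinuousMultilinearMap 𝕂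
      (fun _ : Fin m => PiLp (ENNReal.ofReal p) (fun _ : Fin n => 𝕂)) 𝕂) :
    (∑ j : Fin n,
        ‖T (fun _ => (WithLp.equiv (ENNReal.ofReal p) (Fin n → 𝕂)).symm (Pi.single j 1))‖ ^ s)
        ^ (1 / s)
      ≤ ‖T‖ := by
  have hp0 : 0 < p := m.cast_nonneg.trans_lt hp
  have : NeZero m := ⟨by omega⟩
  refine stmt_7_general ((div_pos hp0 (sub_pos.mpr hp)).trans_le hs) ?_ T
  simpa [ENNReal.toReal_ofReal hp0.le, div_eq_mul_inv] using div_add_inv_le_one hp0 hp hs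
end

section
/- Let m and n be positive integers, let p_1, …, p_m ≥ 1 be real numbers with 1/p_1 + ⋯ + 1/p_m ≥ 1, and let s > 0 be a real number. Then there exists a nonzero continuous m-linear form A : ℓ_{p_1}^n × ⋯ × ℓ_{p_m}^n → 𝕂 with (∑_{j=1}^n |A(e_j, …, e_j)|^s)^{1/s} = n^{1/s} · ‖A‖. Consequently, the constant n^{1/s} in the estimate (∑_{j=1}^n |A(e_j, …, e_j)|^s)^{1/s} ≤ n^{1/s} · ‖A‖ is best possible when 1/p_1 + ⋯ + 1/p_m ≥ 1. -/
/-!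
The extremal form is the diagonal form `(x₁, …, x_m) ↦ ∑ j, x₁(j) ⋯ x_m(j)`. It takes the value `1`
at every `(e_j, …, e_j)`, which are tuples of unit vectors, so everything reduces to the bound
`‖A‖ ≤ 1`, that is, to Hölder's inequality for exponents with `S = ∑ 1 / p_i ≥ 1`. After
normalization all coordinates are at most `1` in modulus, so the weights `1 / p_i` may be lowered to
`1 / (p_i S)`, which add up to `1`, and the weighted AM-GM inequality applies.
-/

open scoped ENNReal NNReal

lemma sum_inv_ofReal {ι : Type*} [Fintype ι] {p : ι → ℝ} (hp : ∀ i, 0 < p i) :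
    ∑ i, (ENNReal.ofReal (p i))⁻¹ = ENNReal.ofReal (∑ i, 1 / p i) := by
  rw [ENNReal.ofReal_sum_of_nonneg fun i _ => (one_div_pos.2 (hp i)).le]
  simp_rw [one_div, ENNReal.ofReal_inv_of_pos (hp _)]

section Holder

variable {ι κ : Type*} [Fintype ι] [Fintype κ]

lemma sum_prod_rpow_le_one {w : ι → ℝ≥0} (hw : 1 ≤ ∑ i, w i) {b : ι → κ → ℝ≥0}
    (hb : ∀ i, ∑ j, b i j ≤ 1) : ∑ j, ∏ i, b i j ^ (w i : ℝ) ≤ 1 := by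
  set S := ∑ i, w i
  have sum_weights : ∑ i, w i / S = 1 := by
    rw [← Finset.sum_div, div_self (one_pos.trans_le hw).ne']
  have b_le_one (i : ι) (j : κ) : b i j ≤ 1 :=
    (Finset.single_le_sum_of_canonicallyOrdered (Finset.mem_univ j)).trans (hb i)
  have lower_exponent (i : ι) (j : κ) : b i j ^ (w i : ℝ) ≤ b i j ^ ((w i / S : ℝ≥0) : ℝ) :=
    Real.rpow_le_rpow_of_exponent_ge' (b i j).2 (b_le_one i j) (w i / S).2
      (NNReal.coe_le_coe.2 (div_le_self (w i).2 hw))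
  calc ∑ j, ∏ i, b i j ^ (w i : ℝ)
      ≤ ∑ j, ∏ i, b i j ^ ((w i / S : ℝ≥0) : ℝ) :=
        Finset.sum_le_sum fun j _ => Finset.prod_le_prod' fun i _ => lower_exponent i j
    _ ≤ ∑ j, ∑ i, w i / S * b i j := by
        gcongr; exact NNReal.geom_mean_le_arith_mean_weighted _ _ _ sum_weights
    _ = ∑ i, w i / S * ∑ j, b i j := by simp_rw [Finset.mul_sum]; exact Finset.sum_comm
    _ ≤ ∑ i, w i / S * 1 := by gcongr with i; exact hb i
    _ = 1 := by simp_rw [mul_one, sum_weights]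

lemma exists_sum_le_one_nnnorm_apply_le_mul_rpow {p : ℝ≥0∞} [Fact (1 ≤ p)] {E : κ → Type*}
    [∀ j, SeminormedAddCommGroup (E j)] (x : PiLp p E) :
    ∃ b : κ → ℝ≥0, ∑ j, b j ≤ 1 ∧ ∀ j, ‖x j‖₊ ≤ ‖x‖₊ * b j ^ (p⁻¹.toNNReal : ℝ) := by
  obtain rfl | hp_top := eq_or_ne p ∞
  · -- The exponent is `0` here, and `0 ^ 0 = 1`.
    exact ⟨0, by simp, fun j => by simpa using PiLp.nnnorm_apply_le x j⟩
  have hp_pos : 0 < p.toReal :=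
    ENNReal.toReal_pos (one_pos.trans_le (Fact.out : 1 ≤ p)).ne' hp_top
  refine ⟨fun j => (‖x j‖₊ / ‖x‖₊) ^ p.toReal, ?_, fun j => ?_⟩
  · have norm_rpow : ‖x‖₊ ^ p.toReal = ∑ j, ‖x j‖₊ ^ p.toReal := by
      rw [PiLp.nnnorm_eq_sum hp_top, one_div, NNReal.rpow_inv_rpow hp_pos.ne']
    simp_rw [NNReal.div_rpow, ← Finset.sum_div, ← norm_rpow]
    exact div_self_le_one _
  · have exponent : ((p⁻¹.toNNReal : ℝ≥0) : ℝ) = p.toReal⁻¹ := ENNReal.toReal_inv p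
    rw [exponent, NNReal.rpow_rpow_inv hp_pos.ne']
    obtain hx | hx := eq_or_ne ‖x‖₊ 0
    · simpa [hx] using PiLp.nnnorm_apply_le x j
    · rw [mul_div_cancel₀ _ hx]

lemma sum_prod_nnnorm_le_prod_nnnorm {p : ι → ℝ≥0∞} [∀ i, Fact (1 ≤ p i)]
    (hp : 1 ≤ ∑ i, (p i)⁻¹) {E : ι → κ → Type*} [∀ i j, SeminormedAddCommGroup (E i j)]
    (x : ∀ i, PiLp (p i) (E i)) : ∑ j, ∏ i, ‖x i j‖₊ ≤ ∏ i, ‖x i‖₊ := by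
  choose b sum_b_le nnnorm_le using fun i => exists_sum_le_one_nnnorm_apply_le_mul_rpow (x i)
  have inv_ne_top (i : ι) : (p i)⁻¹ ≠ ∞ :=
    ENNReal.inv_ne_top.2 (one_pos.trans_le (Fact.out : 1 ≤ p i)).ne'
  have hw : 1 ≤ ∑ i, (p i)⁻¹.toNNReal := by
    rw [← ENNReal.coe_le_coe, ENNReal.ofNNReal_finsetSum]
    simpa only [ENNReal.coe_one, ENNReal.coe_toNNReal (inv_ne_top _)] using hp
  calc ∑ j, ∏ i, ‖x i j‖₊
      ≤ ∑ j, ∏ i, ‖x i‖₊ * b i j ^ ((p i)⁻¹.toNNReal : ℝ) := by gcongr; exact nnnorm_le _ _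
    _ = (∏ i, ‖x i‖₊) * ∑ j, ∏ i, b i j ^ ((p i)⁻¹.toNNReal : ℝ) := by
        simp_rw [Finset.prod_mul_distrib, Finset.mul_sum]
    _ ≤ ∏ i, ‖x i‖₊ := mul_le_of_le_one_right' (sum_prod_rpow_le_one hw sum_b_le)

end Holder

section DiagForm

variable (𝕂 : Type*) [NontriviallyNormedField 𝕂] {ι κ : Type*} [Fintype ι] [Fintype κ]
  (p : ι → ℝ≥0∞)

variable (κ) in
/-- The diagonal multilinear form `x ↦ ∑ j, ∏ i, x i j` on a product of finite-dimensional `ℓ_p`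
spaces, the extremal form for the estimate of the diagonal coefficients by the norm. -/
noncomputable def diagForm : ContinuousMultilinearMap 𝕂 (fun i => PiLp (p i) fun _ : κ => 𝕂) 𝕂 :=
  ∑ j, (ContinuousMultilinearMap.mkPiAlgebra 𝕂 ι 𝕂).compContinuousLinearMap
    fun i => PiLp.proj (p i) (fun _ : κ => 𝕂) j

variable {𝕂 p} in
lemma diagForm_apply (x : ∀ i, PiLp (p i) fun _ : κ => 𝕂) :
    diagForm 𝕂 κ p x = ∑ j, ∏ i, x i j := by
  simp [diagForm]

lemma diagForm_single [Nonempty ι] [DecidableEq κ] (j : κ) :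
    diagForm 𝕂 κ p (fun i => PiLp.single (p i) j 1) = 1 := by
  simp [diagForm_apply]

variable [∀ i, Fact (1 ≤ p i)]

variable (κ) in
lemma one_le_norm_diagForm [Nonempty ι] [Nonempty κ] : 1 ≤ ‖diagForm 𝕂 κ p‖ := by
  classical
  obtain ⟨j⟩ := ‹Nonempty κ›
  simpa [diagForm_single] using (diagForm 𝕂 κ p).le_opNorm fun i => PiLp.single (p i) j 1

variable (κ) {p} in
lemma norm_diagForm_le_one (hp : 1 ≤ ∑ i, (p i)⁻¹) : ‖diagForm 𝕂 κ p‖ ≤ 1 := by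
  refine ContinuousMultilinearMap.opNorm_le_bound zero_le_one fun x => ?_
  calc ‖diagForm 𝕂 κ p x‖
      = ‖∑ j, ∏ i, x i j‖ := by rw [diagForm_apply]
    _ ≤ ∑ j, ‖∏ i, x i j‖ := norm_sum_le _ _
    _ = ∑ j, ∏ i, ‖x i j‖ := by simp_rw [norm_prod]
    _ ≤ ∏ i, ‖x i‖ := by
        simpa only [NNReal.coe_sum, NNReal.coe_prod, coe_nnnorm]
          using NNReal.coe_le_coe.2 (sum_prod_nnnorm_le_prod_nnnorm hp x)
    _ = 1 * ∏ i, ‖x i‖ := (one_mul _).symm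

end DiagForm

theorem stmt_9_general {𝕂 : Type*} [NontriviallyNormedField 𝕂] {ι κ : Type*} [Fintype ι]
    [Fintype κ] [Nonempty κ] [DecidableEq κ] (p : ι → ℝ≥0∞) [∀ i, Fact (1 ≤ p i)]
    (hp : 1 ≤ ∑ i, (p i)⁻¹) :
    ∃ A : ContinuousMultilinearMap 𝕂 (fun i => PiLp (p i) fun _ : κ => 𝕂) 𝕂,
      ‖A‖ = 1 ∧ ∀ j, A (fun i => PiLp.single (p i) j 1) = 1 := by
  have : Nonempty ι := by
    by_contra! _
    simp at hp
  exact ⟨diagForm 𝕂 κ p, (norm_diagForm_le_one 𝕂 κ hp).antisymm (one_le_norm_diagForm 𝕂 κ p),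
    diagForm_single 𝕂 p⟩

/-- For positive integers `m, n`, reals `p_1,…,p_m ≥ 1` with
`1/p_1 + ⋯ + 1/p_m ≥ 1`, and `s > 0`, there exists a nonzero continuous `m`-linear form
`A : ℓ_{p_1}^n × ⋯ × ℓ_{p_m}^n → 𝕂` with
`(∑_{j=1}^n |A(e_j,…,e_j)|^s)^{1/s} = n^{1/s} · ‖A‖`, so the constant `n^{1/s}` is
best possible. -/
theorem stmt_9 {𝕂 : Type*} [RCLike 𝕂] (m n : ℕ) (hm : 0 < m) (hn : 0 < n)
    (p : Fin m → ℝ) (hp : ∀ i, 1 ≤ p i) [∀ i, Fact (1 ≤ ENNReal.ofReal (p i))]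
    (hsum : 1 ≤ ∑ i : Fin m, 1 / p i)
    (s : ℝ) (hs : 0 < s) :
    ∃ A : ContinuousMultilinearMap 𝕂
        (fun i : Fin m => PiLp (ENNReal.ofReal (p i)) (fun _ : Fin n => 𝕂)) 𝕂,
      A ≠ 0 ∧
      (∑ j : Fin n,
          ‖A (fun i => (WithLp.equiv (ENNReal.ofReal (p i)) (Fin n → 𝕂)).symm (Pi.single j 1))‖ ^ s)
          ^ (1 / s)
        = (n : ℝ) ^ (1 / s) * ‖A‖ := by
  have : Nonempty (Fin n) := Fin.pos_iff_nonempty.1 hn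
  have one_le_sum_inv : 1 ≤ ∑ i, (ENNReal.ofReal (p i))⁻¹ := by
    rwa [sum_inv_ofReal fun i => one_pos.trans_le (hp i), ENNReal.one_le_ofReal]
  obtain ⟨A, norm_A, A_single⟩ := stmt_9_general (𝕂 := 𝕂) (κ := Fin n) _ one_le_sum_inv
  refine ⟨A, norm_ne_zero_iff.1 (norm_A ▸ one_ne_zero), ?_⟩
  simp [A_single, norm_A]
end

section
/- Let m and n be positive integers, let p_1, …, p_m ≥ 1 be real numbers with 1/p_1 + ⋯ + 1/p_m ≤ 1, and let s > 0 be a real number. Then there exists a nonzero continuous m-linear form A : ℓ_{p_1}^n × ⋯ × ℓ_{p_m}^n → 𝕂 with (∑_{j=1}^n |A(e_j, …, e_j)|^s)^{1/s} = n^{max{1/p_1 + ⋯ + 1/p_m + 1/s − 1, 0}} · ‖A‖. Consequently, the constant n^{max{1/p_1 + ⋯ + 1/p_m + 1/s − 1, 0}} in the estimate (∑_{j=1}^n |A(e_j, …, e_j)|^s)^{1/s} ≤ n^{max{1/p_1 + ⋯ + 1/p_m + 1/s − 1, 0}} · ‖A‖ is best possible when 1/p_1 + ⋯ + 1/p_m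 ≤ 1. -/
open Finset
open scoped NNReal ENNReal

/-!
Write `σ = ∑ 1 / p i ≤ 1` and let `A_S x = ∑ j ∈ S, ∏ i, x i j` be the diagonal form of a nonempty
set `S` of coordinates. Hölder's inequality, with the missing weight `1 - σ` put on the constant
function `1`, bounds `‖A_S‖` by `|S| ^ (1 - σ)`, and the indicator of `S` in every variable shows
that this is sharp. Since `A_S (e_j, …, e_j)` is `1` for `j ∈ S` and `0` otherwise, the `ℓ_s` norm
of the diagonal is `|S| ^ (1 / s) = |S| ^ (σ + 1 / s - 1) * ‖A_S‖`. Taking for `S` all coordinates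
when the exponent `σ + 1 / s - 1` is nonnegative, and a single one otherwise, gives the extremal
form.
-/

section DiagonalForms

variable {ι κ : Type*} [Fintype ι]

theorem sum_prod_rpow_le_card_rpow_mul_prod (S : Finset κ) {w : ι → ℝ}
    (hw : ∀ i, 0 ≤ w i) (hw₁ : ∑ i, w i ≤ 1) (a : ι → κ → ℝ≥0) :
    ∑ j ∈ S, ∏ i, a i j ^ w i ≤ (#S : ℝ≥0) ^ (1 - ∑ i, w i) * ∏ i, (∑ j ∈ S, a i j) ^ w i := by
  let _ : MeasurableSpace S := ⊤
  have holder := ENNReal.lintegral_mul_prod_norm_pow_le (μ := .count) univ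
    (g := 1) (f := fun i (j : S) => (a i j : ℝ≥0∞)) aemeasurable_const
    (fun i _ => Measurable.of_discrete.aemeasurable) _ (sub_add_cancel 1 (∑ i, w i))
    (sub_nonneg.2 hw₁) fun i _ => hw i
  simp only [← sum_coe_sort S, ← ENNReal.coe_le_coe, ENNReal.coe_mul, ENNReal.ofNNReal_finsetProd,
    ENNReal.ofNNReal_finsetSum, ENNReal.coe_rpow_of_nonneg _ (hw _),
    ENNReal.coe_rpow_of_nonneg _ (sub_nonneg.2 hw₁), ENNReal.coe_natCast]
  simpa [MeasureTheory.lintegral_count] using holder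

/-- This puts `p = ∞` on the same footing as finite exponents: the Hölder weight of an `ℓ_∞`
variable is `∞⁻¹.toReal = 0`, so there any choice of `a` will do. -/
theorem exists_sum_le_one_nnnorm_apply_le [Fintype κ] {β : κ → Type*}
    [∀ j, SeminormedAddCommGroup (β j)] {p : ℝ≥0∞} [Fact (1 ≤ p)] (x : PiLp p β) :
    ∃ a : κ → ℝ≥0, ∑ j, a j ≤ 1 ∧ ∀ j, ‖x j‖₊ ≤ ‖x‖₊ * a j ^ p⁻¹.toReal := by
  obtain rfl | hp := eq_or_ne p ∞
  · exact ⟨0, by simp, by simpa using PiLp.nnnorm_apply_le x⟩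
  have hp₀ : p.toReal ≠ 0 := ((ENNReal.toReal_pos_iff_ne_top p).2 hp).ne'
  have norm_rpow : ‖x‖₊ ^ p.toReal = ∑ j, ‖x j‖₊ ^ p.toReal := by
    rw [PiLp.nnnorm_eq_sum hp, one_div, NNReal.rpow_inv_rpow hp₀]
  refine ⟨fun j => (‖x j‖₊ / ‖x‖₊) ^ p.toReal, ?_, fun j => ?_⟩
  · simp only [NNReal.div_rpow]
    rw [← sum_div, ← norm_rpow]
    exact div_self_le_one _
  · rw [ENNReal.toReal_inv, NNReal.rpow_rpow_inv hp₀]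
    obtain hx | hx := eq_or_ne ‖x‖₊ 0
    · simpa [hx] using PiLp.nnnorm_apply_le x j
    · rw [mul_div_cancel₀ _ hx]

theorem norm_toLp_indicator_const [Fintype κ] {E : Type*} [SeminormedAddCommGroup E]
    (p : ℝ≥0∞) [Fact (1 ≤ p)] {S : Finset κ} (hS : S.Nonempty) (b : E) :
    ‖WithLp.toLp p (Set.indicator (S : Set κ) fun _ => b)‖ = (#S : ℝ) ^ p⁻¹.toReal * ‖b‖ := by
  classical
  obtain rfl | hp := eq_or_ne p ∞
  · obtain ⟨j, hj⟩ := hS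
    rw [PiLp.norm_toLp, ENNReal.inv_top, ENNReal.toReal_zero, Real.rpow_zero, one_mul]
    refine le_antisymm ((pi_norm_le_iff_of_nonneg (norm_nonneg b)).2 fun k => ?_) ?_
    · exact norm_indicator_le_norm_self (fun _ => b) k
    · simpa [hj] using norm_le_pi_norm (Set.indicator (S : Set κ) fun _ => b) j
  · have hp₀ : 0 < p.toReal := (ENNReal.toReal_pos_iff_ne_top p).2 hp
    have norm_rpow (j : κ) : ‖Set.indicator (S : Set κ) (fun _ => b) j‖ ^ p.toReal =
        if j ∈ S then ‖b‖ ^ p.toReal else 0 := by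
      by_cases hj : j ∈ S <;> simp [hj, hp₀.ne']
    rw [PiLp.norm_eq_sum hp₀]
    simp only [norm_rpow, sum_ite_mem, univ_inter, sum_const, nsmul_eq_mul]
    rw [one_div, ENNReal.toReal_inv, Real.mul_rpow (by positivity) (by positivity),
      Real.rpow_rpow_inv (norm_nonneg b) hp₀.ne']

theorem exists_card_rpow_eq_card_rpow_max_mul [Fintype κ] [Nonempty κ] (a b : ℝ) :
    ∃ S : Finset κ, S.Nonempty ∧
      (#S : ℝ) ^ a = (Fintype.card κ : ℝ) ^ max (a - b) 0 * (#S : ℝ) ^ b := by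
  obtain h | h := le_total 0 (a - b)
  · refine ⟨univ, univ_nonempty, ?_⟩
    rw [max_eq_left h, card_univ, ← Real.rpow_add (mod_cast Fintype.card_pos), sub_add_cancel]
  · exact ⟨{Classical.arbitrary κ}, singleton_nonempty _, by simp [max_eq_right h]⟩

/-- The diagonal `ι`-linear form `x ↦ ∑ j ∈ S, ∏ i, x i j` on the product of the spaces `ℓ_{p i}`
over the index set `κ`. Restricting the sum to `S` covers both extremal forms of the theorem: the
full diagonal (`S = univ`) and a product of coordinates (`S = {j}`). -/
noncomputable def diagonalForm (𝕜 : Type*) [NontriviallyNormedField 𝕜]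
    (p : ι → ℝ≥0∞) (S : Finset κ) :
    ContinuousMultilinearMap 𝕜 (fun i => PiLp (p i) fun _ : κ => 𝕜) 𝕜 :=
  ∑ j ∈ S, (ContinuousMultilinearMap.mkPiAlgebra 𝕜 ι 𝕜).compContinuousLinearMap
    fun i => PiLp.proj (p i) (fun _ => 𝕜) j

variable {𝕜 : Type*}

theorem diagonalForm_apply [NontriviallyNormedField 𝕜] (p : ι → ℝ≥0∞) (S : Finset κ)
    (x : ∀ i, PiLp (p i) fun _ : κ => 𝕜) :
    diagonalForm 𝕜 p S x = ∑ j ∈ S, ∏ i, x i j := by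
  simp [diagonalForm]

theorem diagonalForm_single [NontriviallyNormedField 𝕜] [Nonempty ι] [DecidableEq κ]
    (p : ι → ℝ≥0∞) (S : Finset κ) (j : κ) :
    diagonalForm 𝕜 p S (fun i => PiLp.single (p i) j 1) = if j ∈ S then 1 else 0 := by
  simp [diagonalForm_apply]

variable [Fintype κ] (p : ι → ℝ≥0∞) [∀ i, Fact (1 ≤ p i)]

theorem norm_diagonalForm_le [NontriviallyNormedField 𝕜] (hp : ∑ i, (p i)⁻¹.toReal ≤ 1)
    (S : Finset κ) : ‖diagonalForm 𝕜 p S‖ ≤ (#S : ℝ) ^ (1 - ∑ i, (p i)⁻¹.toReal) := by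
  refine ContinuousMultilinearMap.opNorm_le_bound (by positivity) fun x => ?_
  choose a a_sum norm_le using fun i => exists_sum_le_one_nnnorm_apply_le (x i)
  have holder : ∑ j ∈ S, ∏ i, a i j ^ (p i)⁻¹.toReal ≤
      (#S : ℝ≥0) ^ (1 - ∑ i, (p i)⁻¹.toReal) := by
    refine (sum_prod_rpow_le_card_rpow_mul_prod S (fun _ => ENNReal.toReal_nonneg) hp a).trans
      (mul_le_of_le_one_right' (prod_le_one' fun i _ => ?_))
    have a_sum_S : ∑ j ∈ S, a i j ≤ 1 :=
      (sum_le_univ_sum_of_nonneg fun _ => zero_le).trans (a_sum i)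
    exact NNReal.rpow_le_one a_sum_S ENNReal.toReal_nonneg
  rw [diagonalForm_apply]
  suffices ‖∑ j ∈ S, ∏ i, x i j‖₊ ≤ (#S : ℝ≥0) ^ (1 - ∑ i, (p i)⁻¹.toReal) * ∏ i, ‖x i‖₊ by
    simpa only [← NNReal.coe_le_coe, NNReal.coe_mul, NNReal.coe_prod, NNReal.coe_rpow,
      NNReal.coe_natCast, coe_nnnorm] using this
  calc ‖∑ j ∈ S, ∏ i, x i j‖₊
      ≤ ∑ j ∈ S, ∏ i, ‖x i j‖₊ := (nnnorm_sum_le S _).trans_eq (by simp only [nnnorm_prod])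
    _ ≤ ∑ j ∈ S, ∏ i, (‖x i‖₊ * a i j ^ (p i)⁻¹.toReal) := by gcongr; exact norm_le _ _
    _ = (∑ j ∈ S, ∏ i, a i j ^ (p i)⁻¹.toReal) * ∏ i, ‖x i‖₊ := by
      rw [sum_mul]
      simp only [prod_mul_distrib, mul_comm]
    _ ≤ _ := by gcongr

theorem card_rpow_le_norm_diagonalForm [RCLike 𝕜] {S : Finset κ} (hS : S.Nonempty) :
    (#S : ℝ) ^ (1 - ∑ i, (p i)⁻¹.toReal) ≤ ‖diagonalForm 𝕜 p S‖ := by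
  have hS₀ : (0 : ℝ) < #S := mod_cast hS.card_pos
  let v (i : ι) : PiLp (p i) fun _ : κ => 𝕜 :=
    WithLp.toLp (p i) (Set.indicator (S : Set κ) fun _ => 1)
  have value : diagonalForm 𝕜 p S v = #S := by
    have v_apply (i : ι) (j : κ) (hj : j ∈ S) : v i j = 1 :=
      Set.indicator_of_mem (mem_coe.2 hj) fun _ => 1
    rw [diagonalForm_apply, sum_congr rfl fun j hj => prod_eq_one fun i _ => v_apply i j hj,
      sum_const, nsmul_one]
  have norm_v (i : ι) : ‖v i‖ = (#S : ℝ) ^ (p i)⁻¹.toReal := by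
    rw [norm_toLp_indicator_const (p i) hS, norm_one, mul_one]
  have bound : (#S : ℝ) ≤ ‖diagonalForm 𝕜 p S‖ * (#S : ℝ) ^ ∑ i, (p i)⁻¹.toReal := by
    simpa only [value, norm_v, RCLike.norm_natCast, ← Real.rpow_sum_of_pos hS₀]
      using (diagonalForm 𝕜 p S).le_opNorm v
  rwa [Real.rpow_sub hS₀, Real.rpow_one, div_le_iff₀ (by positivity)]

theorem norm_diagonalForm [RCLike 𝕜] (hp : ∑ i, (p i)⁻¹.toReal ≤ 1) {S : Finset κ}
    (hS : S.Nonempty) :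
    ‖diagonalForm 𝕜 p S‖ = (#S : ℝ) ^ (1 - ∑ i, (p i)⁻¹.toReal) :=
  (norm_diagonalForm_le p hp S).antisymm (card_rpow_le_norm_diagonalForm p hS)

theorem stmt_11_general [RCLike 𝕜] [Nonempty ι] [Nonempty κ] [DecidableEq κ]
    (hp : ∑ i, (p i)⁻¹.toReal ≤ 1) {s : ℝ} (hs : 0 < s) :
    ∃ A : ContinuousMultilinearMap 𝕜 (fun i => PiLp (p i) fun _ : κ => 𝕜) 𝕜, A ≠ 0 ∧
      (∑ j, ‖A fun i => PiLp.single (p i) j 1‖ ^ s) ^ (1 / s) =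
        (Fintype.card κ : ℝ) ^ max (∑ i, (p i)⁻¹.toReal + 1 / s - 1) 0 * ‖A‖ := by
  obtain ⟨S, hS, hcard⟩ :=
    exists_card_rpow_eq_card_rpow_max_mul (κ := κ) (1 / s) (1 - ∑ i, (p i)⁻¹.toReal)
  have norm_eq := norm_diagonalForm (𝕜 := 𝕜) p hp hS
  have diagonal_sum :
      ∑ j, ‖diagonalForm 𝕜 p S fun i => PiLp.single (p i) j 1‖ ^ s = #S := by
    simp [diagonalForm_single, apply_ite, hs.ne']
  refine ⟨diagonalForm 𝕜 p S, norm_pos_iff.1 (norm_eq ▸ by positivity), ?_⟩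
  rw [diagonal_sum, norm_eq, hcard]
  ring_nf

end DiagonalForms

/-- For positive integers `m, n`, reals `p_1,…,p_m ≥ 1` with
`1/p_1 + ⋯ + 1/p_m ≤ 1`, and `s > 0`, there exists a nonzero continuous `m`-linear form
`A : ℓ_{p_1}^n × ⋯ × ℓ_{p_m}^n → 𝕂` with
`(∑_{j=1}^n |A(e_j,…,e_j)|^s)^{1/s} = n^{max{1/p_1 + ⋯ + 1/p_m + 1/s − 1, 0}} · ‖A‖`,
so this constant is best possible. -/
theorem stmt_11 {𝕂 : Type*} [RCLike 𝕂] (m n : ℕ) (hm : 0 < m) (hn : 0 < n)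
    (p : Fin m → ℝ) (hp : ∀ i, 1 ≤ p i) [∀ i, Fact (1 ≤ ENNReal.ofReal (p i))]
    (hsum : ∑ i : Fin m, 1 / p i ≤ 1)
    (s : ℝ) (hs : 0 < s) :
    ∃ A : ContinuousMultilinearMap 𝕂
        (fun i : Fin m => PiLp (ENNReal.ofReal (p i)) (fun _ : Fin n => 𝕂)) 𝕂,
      A ≠ 0 ∧
      (∑ j : Fin n,
          ‖A (fun i => (WithLp.equiv (ENNReal.ofReal (p i)) (Fin n → 𝕂)).symm (Pi.single j 1))‖ ^ s)
          ^ (1 / s)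
        = (n : ℝ) ^ max (∑ i : Fin m, 1 / p i + 1 / s - 1) 0 * ‖A‖ := by
  have : Nonempty (Fin m) := Fin.pos_iff_nonempty.1 hm
  have : Nonempty (Fin n) := Fin.pos_iff_nonempty.1 hn
  have toReal_p (i : Fin m) := ENNReal.toReal_ofReal (zero_le_one.trans (hp i))
  simpa [toReal_p] using stmt_11_general (𝕜 := 𝕂) (κ := Fin n)
    (fun i => ENNReal.ofReal (p i)) (by simpa [toReal_p] using hsum) hs
end
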